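/- Let λ be an unrefinable partition sequence of length ℓ, and let a and b be two distinct missing parts of λ. Then for all integers x ≥ 1 and y ≥ 1 with x·a + y·b ≤ ℓ, the number x·a + y·b is a missing part of λ (i.e., it is not a part of λ). -/

import Mathlib

/-!
In an unrefinable sequence the sum of two distinct missing parts is missing as soon as it is
at most the length (`PartitionSeq.Unrefinable.missing_add`). Starting from `a + b`, one adds a
copy of `b` or `a` at a time: the number reached so far is missing and contains a summand `a`
and a summand `b`, hence exceeds both, so the two numbers added are always distinct.
-/

/-- A *partition sequence*: positions `1, …, len`, where position `i` carries either
the value `i` (then `i` is a part) or `⋆` (then `i` is a missing part).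
It is encoded by its length together with the set of its parts. -/
structure PartitionSeq where
  len : ℕ
  parts : Finset ℕ
  parts_subset : parts ⊆ Finset.Icc 1 len

namespace PartitionSeq

/-- `x` is a missing part of `l`, i.e. `1 ≤ x ≤ len` and `x` is not a part. -/
def Missing (l : PartitionSeq) (x : ℕ) : Prop :=
  x ∈ Finset.Icc 1 l.len ∧ x ∉ l.parts

instance (l : PartitionSeq) : DecidablePred l.Missing := fun x =>
  inferInstanceAs (Decidable (x ∈ Finset.Icc 1 l.len ∧ x ∉ l.parts))

/-- The sum `Σ(l)` of the parts of `l`; `l` represents a partition of `Σ(l)`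
into distinct parts. -/
def sum (l : PartitionSeq) : ℕ := l.parts.sum id

/-- The number of missing parts of `l`. -/
def missingCount (l : PartitionSeq) : ℕ := (Finset.Icc 1 l.len \ l.parts).card

/-- The minimal excludant: the smallest missing part of `l`, or `0` if there is none. -/
noncomputable def mex (l : PartitionSeq) : ℕ := sInf {x | l.Missing x}

/-- The part `r` of `l` is refinable: `r` is the sum of `t > 1` pairwise distinct
missing parts of `l`. -/
def IsRefinablePart (l : PartitionSeq) (r : ℕ) : Prop :=
  r ∈ l.parts ∧ ∃ S : Finset ℕ, (∀ x ∈ S, l.Missing x) ∧ 2 ≤ S.card ∧ S.sum id = r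

/-- `l` is refinable when some part of `l` admits a refinement. -/
def Refinable (l : PartitionSeq) : Prop := ∃ r, l.IsRefinablePart r

/-- `l` is unrefinable when no part of `l` admits a refinement. -/
def Unrefinable (l : PartitionSeq) : Prop := ¬ l.Refinable

end PartitionSeq

theorem PartitionSeq.Unrefinable.missing_add {l : PartitionSeq} (h : l.Unrefinable) {a b : ℕ}
    (ha : l.Missing a) (hb : l.Missing b) (hab : a ≠ b) (hle : a + b ≤ l.len) :
    l.Missing (a + b) := by
  have ha1 := (Finset.mem_Icc.mp ha.1).1
  refine ⟨Finset.mem_Icc.mpr ⟨by omega, hle⟩, fun hmem => h ⟨a + b, hmem, {a, b}, ?_, ?_, ?_⟩⟩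
  · simp [ha, hb]
  · simp [Finset.card_pair hab]
  · simp [Finset.sum_pair hab]

/-- In an unrefinable partition sequence, if `a` and `b` are distinct missing parts
then `x·a + y·b` is a missing part for all `x, y ≥ 1` with `x·a + y·b ≤ ℓ`. -/
theorem missing_linear_combination (l : PartitionSeq) (hunref : l.Unrefinable)
    (a b : ℕ) (ha : l.Missing a) (hb : l.Missing b) (hab : a ≠ b) :
    ∀ x y : ℕ, 1 ≤ x → 1 ≤ y → x * a + y * b ≤ l.len →
      l.Missing (x * a + y * b) := by
  have ha1 := (Finset.mem_Icc.mp ha.1).1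
  have hb1 := (Finset.mem_Icc.mp hb.1).1
  intro x y hx hy
  induction x, hx using Nat.le_induction with
  | base =>
    induction y, hy using Nat.le_induction with
    | base =>
      intro hle
      simpa using hunref.missing_add ha hb hab (by simpa using hle)
    | succ y hy ih =>
      intro hle
      have e : 1 * a + (y + 1) * b = (1 * a + y * b) + b := by ring
      rw [e] at hle ⊢
      have hyb : b ≤ y * b := Nat.le_mul_of_pos_left b hy
      exact hunref.missing_add (ih (by omega)) hb (by omega) hle
  | succ x hx ih =>
    intro hle
    have e : (x + 1) * a + y * b = (x * a + y * b) + a := by ring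
    rw [e] at hle ⊢
    have hxa : a ≤ x * a := Nat.le_mul_of_pos_left a hx
    have hyb : b ≤ y * b := Nat.le_mul_of_pos_left b hy
    exact hunref.missing_add (ih (by omega)) ha (by omega) hle
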